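/- arXiv:solv-int/9702006 — 3 statements merged into one kernel-verified Lean document; each statement's English description precedes it below -/
import Mathlib

section
/- In Nijenhuis coordinates, the Hamiltonian of the three-degrees-of-freedom Hénon–Heiles type system takes the separated form: for all (λ1,λ2,λ3,μ1,μ2,μ3) with λ1,λ2,λ3 pairwise distinct and λ1 λ2 λ3 > 0, if (q,p) is given by the transformation Φ below, then H1(q,p) = λ1(16 μ1² − λ1⁵)/(8 λ12 λ13) + λ2(16 μ2² − λ2⁵)/(8 λ21 λ23) + λ3(16 μ3² − λ3⁵)/(8 λ31 λ32), where λij := λi − λj. -/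
/-! The terms `f i / ((x i - x j) * (x i - x k))` in the transformation and in the separated
Hamiltonian are those of the second divided difference of `f` at the nodes `x`, so the separated
form splits into two identities. Kinetic energy: put `a i = m i / ((x i - x j) * (x i - x k))`; as
a quadratic form in `a`, the kinetic energy is diagonal. Potential: multiplied by `-8`, it is the
divided difference of `x ^ 6`, computed by the linear recurrence that the cubic with roots
`x 0, x 1, x 2` imposes on the divided differences of powers. -/

namespace HenonHeiles

open Finset Function

section DividedDifference

variable {ι K : Type*} [Fintype ι] [DecidableEq ι] [Field K]

/-- The divided difference of highest order of the values `f` at the nodes `x`, as a linear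
functional of `f`. For pairwise distinct nodes this is the top coefficient of the interpolation
polynomial; where two nodes coincide, the inverse of `0` makes it a junk value. -/
def dividedDifference (x : ι → K) : (ι → K) →ₗ[K] K :=
  ∑ i, Lagrange.nodalWeight univ x i • LinearMap.proj i

theorem dividedDifference_apply (x f : ι → K) :
    dividedDifference x f = ∑ i, f i / ∏ j ∈ univ.erase i, (x i - x j) := by
  simp [dividedDifference, Lagrange.nodalWeight, div_eq_inv_mul]

theorem dividedDifference_eval {x : ι → K} (hx : Injective x) {P : Polynomial K}
    (hP : P.degree < Fintype.card ι) :
    dividedDifference x (fun i ↦ P.eval (x i)) = P.coeff (Fintype.card ι - 1) := by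
  rw [dividedDifference_apply, ← card_univ, Lagrange.coeff_eq_sum hx.injOn hP]

theorem dividedDifference_pow {x : ι → K} (hx : Injective x) {n : ℕ} (hn : n < Fintype.card ι) :
    dividedDifference x (x ^ n) = if n + 1 = Fintype.card ι then 1 else 0 := by
  have hdeg : (Polynomial.X ^ n : Polynomial K).degree < Fintype.card ι := by
    simpa using hn
  have heval := dividedDifference_eval hx hdeg
  simp only [Polynomial.eval_pow, Polynomial.eval_X, Polynomial.coeff_X_pow] at heval
  exact heval.trans (if_congr (by lia) rfl rfl)

end DividedDifference

/- The coefficient of `a i * a j` vanishes since `x i * x j * (x i + x j - (x 0 + x 1 + x 2))` is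
`-(x 0 * x 1 * x 2)`, and that of `a i ^ 2` factors since
`x i * (2 * x i - (x 0 + x 1 + x 2)) + x j * x k = (x i - x j) * (x i - x k)`. -/
theorem kineticForm_eq_diagonal {R : Type*} [CommRing R] (x a : Fin 3 → R) :
    x 0 * x 1 * x 2 * (∑ i, a i) ^ 2
        - (∑ i, x i * a i) * ∑ i, x i * a i * (x 0 + x 1 + x 2 - 2 * x i) =
      x 0 * a 0 ^ 2 * ((x 0 - x 1) * (x 0 - x 2)) + x 1 * a 1 ^ 2 * ((x 1 - x 0) * (x 1 - x 2))
        + x 2 * a 2 ^ 2 * ((x 2 - x 0) * (x 2 - x 1)) := by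
  simp only [Fin.sum_univ_three]
  ring

section ThreeNodes

variable {K : Type*} [Field K]

theorem dividedDifference_fin_three (x f : Fin 3 → K) :
    dividedDifference x f =
      f 0 / ((x 0 - x 1) * (x 0 - x 2)) + f 1 / ((x 1 - x 0) * (x 1 - x 2))
        + f 2 / ((x 2 - x 0) * (x 2 - x 1)) := by
  have erase_zero : (univ : Finset (Fin 3)).erase 0 = {1, 2} := by decide
  have erase_one : (univ : Finset (Fin 3)).erase 1 = {0, 2} := by decide
  have erase_two : (univ : Finset (Fin 3)).erase 2 = {0, 1} := by decide
  simp [dividedDifference_apply, Fin.sum_univ_three, erase_zero, erase_one, erase_two]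

theorem dividedDifference_pow_add_three (x : Fin 3 → K) (n : ℕ) :
    dividedDifference x (x ^ (n + 3)) =
      (x 0 + x 1 + x 2) * dividedDifference x (x ^ (n + 2))
        - (x 0 * x 1 + x 0 * x 2 + x 1 * x 2) * dividedDifference x (x ^ (n + 1))
        + x 0 * x 1 * x 2 * dividedDifference x (x ^ n) := by
  have vieta : x ^ (n + 3) = (x 0 + x 1 + x 2) • x ^ (n + 2)
      - (x 0 * x 1 + x 0 * x 2 + x 1 * x 2) • x ^ (n + 1) + (x 0 * x 1 * x 2) • x ^ n := by
    funext i
    fin_cases i <;>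
      simp only [Pi.add_apply, Pi.sub_apply, Pi.smul_apply, Pi.pow_apply, smul_eq_mul] <;>
      ring!
  simp only [vieta, map_add, map_sub, map_smul, smul_eq_mul]

theorem dividedDifference_pow_six {x : Fin 3 → K} (hx : Injective x) :
    dividedDifference x (x ^ 6) =
      (x 0 + x 1 + x 2) ^ 4
        - 3 * (x 0 + x 1 + x 2) ^ 2 * (x 0 * x 1 + x 0 * x 2 + x 1 * x 2)
        + (x 0 * x 1 + x 0 * x 2 + x 1 * x 2) ^ 2
        + 2 * (x 0 + x 1 + x 2) * (x 0 * x 1 * x 2) := by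
  have h0 : dividedDifference x (x ^ 0) = 0 := by simpa using dividedDifference_pow hx (n := 0)
  have h1 : dividedDifference x (x ^ 1) = 0 := by simpa using dividedDifference_pow hx (n := 1)
  have h2 : dividedDifference x (x ^ 2) = 1 := by simpa using dividedDifference_pow hx (n := 2)
  have h3 := dividedDifference_pow_add_three x 0
  have h4 := dividedDifference_pow_add_three x 1
  have h5 := dividedDifference_pow_add_three x 2
  have h6 := dividedDifference_pow_add_three x 3
  simp only [Nat.reduceAdd] at h3 h4 h5 h6
  rw [h6, h5, h4, h3, h2, h1, h0]
  ring

theorem kineticForm_dividedDifference (x m : Fin 3 → K) :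
    x 0 * x 1 * x 2 * dividedDifference x m ^ 2
        - dividedDifference x (x * m)
          * dividedDifference x (fun i ↦ x i * m i * (x 0 + x 1 + x 2 - 2 * x i)) =
      dividedDifference x (x * m ^ 2) := by
  have diagonal := kineticForm_eq_diagonal x ![m 0 / ((x 0 - x 1) * (x 0 - x 2)),
    m 1 / ((x 1 - x 0) * (x 1 - x 2)), m 2 / ((x 2 - x 0) * (x 2 - x 1))]
  have mul_div_sq_mul (c u d : K) : c * (u / d) ^ 2 * d = c * u ^ 2 / d := by field_simp
  simp only [Fin.sum_univ_three, Matrix.cons_val, mul_div_sq_mul] at diagonal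
  simp only [dividedDifference_fin_three, Pi.mul_apply, Pi.pow_apply]
  linear_combination diagonal

end ThreeNodes

end HenonHeiles

open HenonHeiles in
theorem henon_heiles_3dof_separated_form_general {K : Type*} [Field K] [NeZero (2 : K)]
    {l1 l2 l3 m1 m2 m3 : K} (h12 : l1 ≠ l2) (h13 : l1 ≠ l3) (h23 : l2 ≠ l3)
    {q1 q2 q3 p1 p2 p3 : K}
    (hq1 : q1 = -(1 / 2) * (l1 + l2 + l3))
    (hq2 : q2 = -(1 / 8) * (l1 + l2 + l3) ^ 2 + (1 / 2) * (l1 * l2 + l1 * l3 + l2 * l3))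
    (hq3 : q3 ^ 2 = l1 * l2 * l3)
    (hp1 : p1 = l1 * m1 * (-l1 + l2 + l3) / ((l1 - l2) * (l1 - l3))
              + l2 * m2 * (l1 - l2 + l3) / ((l2 - l1) * (l2 - l3))
              + l3 * m3 * (l1 + l2 - l3) / ((l3 - l1) * (l3 - l2)))
    (hp2 : p2 = -2 * (l1 * m1 / ((l1 - l2) * (l1 - l3))
              + l2 * m2 / ((l2 - l1) * (l2 - l3))
              + l3 * m3 / ((l3 - l1) * (l3 - l2))))
    (hp3 : p3 = 2 * q3 * (m1 / ((l1 - l2) * (l1 - l3))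
              + m2 / ((l2 - l1) * (l2 - l3))
              + m3 / ((l3 - l1) * (l3 - l2)))) :
    (1 / 2) * (2 * p1 * p2 + p3 ^ 2) - (5 / 8) * q1 ^ 4 + (5 / 2) * q1 ^ 2 * q2
      + (1 / 2) * q1 * q3 ^ 2 - (1 / 2) * q2 ^ 2 =
    l1 * (16 * m1 ^ 2 - l1 ^ 5) / (8 * (l1 - l2) * (l1 - l3))
      + l2 * (16 * m2 ^ 2 - l2 ^ 5) / (8 * (l2 - l1) * (l2 - l3))
      + l3 * (16 * m3 ^ 2 - l3 ^ 5) / (8 * (l3 - l1) * (l3 - l2)) := by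
  have two_ne : (2 : K) ≠ 0 := NeZero.ne 2
  have eight_ne : (8 : K) ≠ 0 := by
    rw [show (8 : K) = 2 ^ 3 by norm_num]
    exact pow_ne_zero 3 two_ne
  let x : Fin 3 → K := ![l1, l2, l3]
  let m : Fin 3 → K := ![m1, m2, m3]
  have hx : Function.Injective x := by
    simp [x, Function.Injective, Fin.forall_fin_succ, h12, h13, h23, h12.symm, h13.symm, h23.symm]
  have kinetic : 2 * p1 * p2 + p3 ^ 2 = 4 * dividedDifference x (x * m ^ 2) := by
    rw [← kineticForm_dividedDifference, hp1, hp2, hp3]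
    simp only [dividedDifference_fin_three, x, m, Pi.mul_apply, Matrix.cons_val, mul_pow, hq3]
    ring
  have potential : 5 * q1 ^ 4 - 20 * q1 ^ 2 * q2 - 4 * q1 * q3 ^ 2 + 4 * q2 ^ 2 =
      dividedDifference x (x ^ 6) := by
    rw [dividedDifference_pow_six hx, hq1, hq2, hq3]
    simp only [x, Matrix.cons_val]
    field_simp
    ring
  calc
    _ = (16 * dividedDifference x (x * m ^ 2) - dividedDifference x (x ^ 6)) / 8 := by
      rw [kinetic, ← potential]
      field_simp
      ring
    _ = _ := by
      simp only [dividedDifference_fin_three, x, m, Pi.mul_apply, Pi.pow_apply, Matrix.cons_val,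
        ← div_div]
      ring

theorem henon_heiles_3dof_separated_form
    (l1 l2 l3 m1 m2 m3 : ℝ)
    (h12 : l1 ≠ l2) (h13 : l1 ≠ l3) (h23 : l2 ≠ l3)
    (hpos : 0 < l1 * l2 * l3)
    (q1 q2 q3 p1 p2 p3 : ℝ)
    (hq1 : q1 = -(1/2) * (l1 + l2 + l3))
    (hq2 : q2 = -(1/8) * (l1 + l2 + l3)^2 + (1/2) * (l1*l2 + l1*l3 + l2*l3))
    (hq3 : q3 = Real.sqrt (l1 * l2 * l3))
    (hp1 : p1 = l1 * m1 * (-l1 + l2 + l3) / ((l1 - l2) * (l1 - l3))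
              + l2 * m2 * (l1 - l2 + l3) / ((l2 - l1) * (l2 - l3))
              + l3 * m3 * (l1 + l2 - l3) / ((l3 - l1) * (l3 - l2)))
    (hp2 : p2 = -2 * (l1 * m1 / ((l1 - l2) * (l1 - l3))
              + l2 * m2 / ((l2 - l1) * (l2 - l3))
              + l3 * m3 / ((l3 - l1) * (l3 - l2))))
    (hp3 : p3 = 2 * Real.sqrt (l1 * l2 * l3) *
                (m1 / ((l1 - l2) * (l1 - l3))
               + m2 / ((l2 - l1) * (l2 - l3))
               + m3 / ((l3 - l1) * (l3 - l2)))) :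
    (1/2) * (2 * p1 * p2 + p3^2) - (5/8) * q1^4 + (5/2) * q1^2 * q2
      + (1/2) * q1 * q3^2 - (1/2) * q2^2 =
    l1 * (16 * m1^2 - l1^5) / (8 * (l1 - l2) * (l1 - l3))
      + l2 * (16 * m2^2 - l2^5) / (8 * (l2 - l1) * (l2 - l3))
      + l3 * (16 * m3^2 - l3^5) / (8 * (l3 - l1) * (l3 - l2)) :=
  henon_heiles_3dof_separated_form_general h12 h13 h23 hq1 hq2
    (hq3 ▸ Real.sq_sqrt hpos.le) hp1 hp2 (hq3 ▸ hp3)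
end

section
/- The transformation Φ from Nijenhuis coordinates to the original coordinates of the three-degrees-of-freedom Hénon–Heiles type system is canonical: on the open set where λ1,λ2,λ3 are pairwise distinct and λ1 λ2 λ3 > 0, the Jacobian matrix DΦ of Φ satisfies (DΦ)ᵀ J (DΦ) = J pointwise, where J = [[0, I],[−I, 0]] is the canonical symplectic 6×6 matrix (I the 3×3 identity), the coordinates being ordered as (λ1,λ2,λ3;μ1,μ2,μ3) in the source and (q1,q2,q3;p1,p2,p3) in the target. -/
/- STATEMENT 6: the transformation Φ from Nijenhuis coordinates (λ;μ) to (q;p)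
of the 3-dof Hénon–Heiles type system is canonical: (DΦ)ᵀ J (DΦ) = J on the open
set where λ1,λ2,λ3 are pairwise distinct and λ1 λ2 λ3 > 0. -/

noncomputable section

open Matrix

/-- the canonical symplectic matrix `J = [[0, I],[−I, 0]]`. -/
def Jcan : Matrix (Fin 6) (Fin 6) ℝ :=
  !![0, 0, 0, 1, 0, 0;
     0, 0, 0, 0, 1, 0;
     0, 0, 0, 0, 0, 1;
     -1, 0, 0, 0, 0, 0;
     0, -1, 0, 0, 0, 0;
     0, 0, -1, 0, 0, 0]

/-- the map `Φ : (λ1,λ2,λ3;μ1,μ2,μ3) ↦ (q1,q2,q3;p1,p2,p3)`. -/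
def Phi (y : Fin 6 → ℝ) : Fin 6 → ℝ :=
  let l1 := y 0; let l2 := y 1; let l3 := y 2
  let m1 := y 3; let m2 := y 4; let m3 := y 5
  ![-(1/2) * (l1 + l2 + l3),
    -(1/8) * (l1 + l2 + l3)^2 + (1/2) * (l1*l2 + l1*l3 + l2*l3),
    Real.sqrt (l1 * l2 * l3),
    l1 * m1 * (-l1 + l2 + l3) / ((l1 - l2) * (l1 - l3))
      + l2 * m2 * (l1 - l2 + l3) / ((l2 - l1) * (l2 - l3))
      + l3 * m3 * (l1 + l2 - l3) / ((l3 - l1) * (l3 - l2)),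
    -2 * (l1 * m1 / ((l1 - l2) * (l1 - l3))
      + l2 * m2 / ((l2 - l1) * (l2 - l3))
      + l3 * m3 / ((l3 - l1) * (l3 - l2))),
    2 * Real.sqrt (l1 * l2 * l3) *
      (m1 / ((l1 - l2) * (l1 - l3))
       + m2 / ((l2 - l1) * (l2 - l3))
       + m3 / ((l3 - l1) * (l3 - l2)))]

/-- the Jacobian matrix of `Φ` at `y`. -/
def JacPhi (y : Fin 6 → ℝ) : Matrix (Fin 6) (Fin 6) ℝ :=
  Matrix.of fun i j => fderiv ℝ (fun z => Phi z i) y (Pi.single j 1)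

/-! The map `Φ` is a point transformation written in the elementary symmetric polynomials `eᵢ` of
the `λₖ`: `q` depends on `λ` only, and the momenta are `p = (∂q/∂λ)⁻ᵀ μ`. Writing
`Δₖ = ∏_{j ≠ k} (λₖ - λⱼ)`, substituting the formulas for `p` gives
`∑ pᵢ dqᵢ = ∑ₖ (μₖ / Δₖ) (λₖ² de₁ - λₖ de₂ + de₃)`,
and varying the coefficients of `t³ - e₁ t² + e₂ t - e₃` at its root `λₖ` shows that the last factor
is `Δₖ dλₖ`. Hence `Φ` pulls `∑ pᵢ dqᵢ` back to `∑ μₖ dλₖ`, and the exterior derivative of this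
equality of one-forms is the claim. -/

open Filter Topology

namespace HenonHeiles

section Liouville

variable {𝕜 E ι κ : Type*} [RCLike 𝕜] [NormedAddCommGroup E] [NormedSpace 𝕜 E]
  [Fintype ι] [Fintype κ]

/-- The Liouville (tautological) one-form `∑ pᵢ dqᵢ` of positions `q` and momenta `p`. -/
def liouvilleForm (q p : ι → E → 𝕜) (x : E) : E →L[𝕜] 𝕜 :=
  ∑ i, p i x • fderiv 𝕜 (q i) x

/-- The canonical two-form `∑ dqᵢ ∧ dpᵢ` at `x`, evaluated on a pair of tangent vectors. The sign is
the one of the matrix `J = [[0, I], [-I, 0]]`, so this is minus the exterior derivative of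
`liouvilleForm q p`. -/
def canonicalTwoForm (q p : ι → E → 𝕜) (x v w : E) : 𝕜 :=
  ∑ i, (fderiv 𝕜 (q i) x v * fderiv 𝕜 (p i) x w - fderiv 𝕜 (p i) x v * fderiv 𝕜 (q i) x w)

theorem fderiv_liouvilleForm_apply {q p : ι → E → 𝕜} {x : E}
    (hq : ∀ i, ContDiffAt 𝕜 2 (q i) x) (hp : ∀ i, DifferentiableAt 𝕜 (p i) x) (v w : E) :
    fderiv 𝕜 (liouvilleForm q p) x v w =
      ∑ i, (p i x * fderiv 𝕜 (fderiv 𝕜 (q i)) x v w + fderiv 𝕜 (p i) x v * fderiv 𝕜 (q i) x w) := by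
  have hdq i : DifferentiableAt 𝕜 (fderiv 𝕜 (q i)) x :=
    ((hq i).fderiv_right (m := 1) (by norm_num)).differentiableAt one_ne_zero
  have hθ := HasFDerivAt.fun_sum (u := Finset.univ) fun i _ ↦
    (hp i).hasFDerivAt.smul (hdq i).hasFDerivAt
  rw [show fderiv 𝕜 (liouvilleForm q p) x = _ from hθ.fderiv]
  simp

theorem canonicalTwoForm_eq_fderiv_liouvilleForm {q p : ι → E → 𝕜} {x : E}
    (hq : ∀ i, ContDiffAt 𝕜 2 (q i) x) (hp : ∀ i, DifferentiableAt 𝕜 (p i) x) (v w : E) :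
    canonicalTwoForm q p x v w =
      fderiv 𝕜 (liouvilleForm q p) x w v - fderiv 𝕜 (liouvilleForm q p) x v w := by
  simp only [fderiv_liouvilleForm_apply hq hp, canonicalTwoForm, ← Finset.sum_sub_distrib]
  refine Finset.sum_congr rfl fun i _ ↦ ?_
  have hsymm : IsSymmSndFDerivAt 𝕜 (q i) x := (hq i).isSymmSndFDerivAt (by simp)
  rw [hsymm.eq v w]
  ring

theorem canonicalTwoForm_eq_of_liouvilleForm_eventuallyEq
    {q p : ι → E → 𝕜} {q' p' : κ → E → 𝕜} {x : E}
    (hq : ∀ i, ContDiffAt 𝕜 2 (q i) x) (hp : ∀ i, DifferentiableAt 𝕜 (p i) x)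
    (hq' : ∀ k, ContDiffAt 𝕜 2 (q' k) x) (hp' : ∀ k, DifferentiableAt 𝕜 (p' k) x)
    (h : liouvilleForm q p =ᶠ[𝓝 x] liouvilleForm q' p') (v w : E) :
    canonicalTwoForm q p x v w = canonicalTwoForm q' p' x v w := by
  rw [canonicalTwoForm_eq_fderiv_liouvilleForm hq hp,
    canonicalTwoForm_eq_fderiv_liouvilleForm hq' hp', h.fderiv_eq]

end Liouville

section SymplecticMatrix

/-- The position components of a map into `ℝ⁶ = ℝ³ × ℝ³`. -/
def positions {X : Type*} (F : X → Fin 6 → ℝ) (k : Fin 3) (x : X) : ℝ :=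
  F x (Fin.castAdd 3 k)

/-- The momentum components of a map into `ℝ⁶ = ℝ³ × ℝ³`. -/
def momenta {X : Type*} (F : X → Fin 6 → ℝ) (k : Fin 3) (x : X) : ℝ :=
  F x (Fin.natAdd 3 k)

theorem dotProduct_Jcan_mulVec (u w : Fin 6 → ℝ) :
    u ⬝ᵥ Jcan *ᵥ w =
      ∑ k : Fin 3, (u (Fin.castAdd 3 k) * w (Fin.natAdd 3 k)
        - u (Fin.natAdd 3 k) * w (Fin.castAdd 3 k)) := by
  simp only [dotProduct, mulVec, Jcan, Fin.sum_univ_six, Fin.sum_univ_three, of_apply, cons_val,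
    Fin.natAdd_eq_addNat, Fin.reduceCastAdd, Fin.reduceAddNat]
  ring

theorem transpose_JacPhi_mul_Jcan_mul_JacPhi_apply (y : Fin 6 → ℝ) (i j : Fin 6) :
    ((JacPhi y)ᵀ * Jcan * JacPhi y) i j =
      canonicalTwoForm (positions Phi) (momenta Phi) y (Pi.single i 1) (Pi.single j 1) := by
  rw [mul_mul_apply, dotProduct_Jcan_mulVec]
  rfl

theorem fderiv_positions_id (k : Fin 3) (y : Fin 6 → ℝ) :
    fderiv ℝ (positions id k) y = .proj (Fin.castAdd 3 k) :=
  (hasFDerivAt_apply (Fin.castAdd 3 k) y).fderiv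

theorem fderiv_momenta_id (k : Fin 3) (y : Fin 6 → ℝ) :
    fderiv ℝ (momenta id k) y = .proj (Fin.natAdd 3 k) :=
  (hasFDerivAt_apply (Fin.natAdd 3 k) y).fderiv

theorem Jcan_apply_eq_canonicalTwoForm (y : Fin 6 → ℝ) (i j : Fin 6) :
    Jcan i j = canonicalTwoForm (positions id) (momenta id) y (Pi.single i 1) (Pi.single j 1) := by
  simp only [canonicalTwoForm, fderiv_positions_id, fderiv_momenta_id,
    ContinuousLinearMap.proj_apply]
  rw [← dotProduct_Jcan_mulVec]
  simp

end SymplecticMatrix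

section ElementarySymmetric

/-- The first elementary symmetric polynomial in the coordinates `λ₁, λ₂, λ₃`. -/
def esymm₁ (y : Fin 6 → ℝ) : ℝ := y 0 + y 1 + y 2

/-- The second elementary symmetric polynomial in the coordinates `λ₁, λ₂, λ₃`. -/
def esymm₂ (y : Fin 6 → ℝ) : ℝ := y 0 * y 1 + y 0 * y 2 + y 1 * y 2

/-- The third elementary symmetric polynomial in the coordinates `λ₁, λ₂, λ₃`. -/
def esymm₃ (y : Fin 6 → ℝ) : ℝ := y 0 * y 1 * y 2

/-- The values `Δₖ = ∏_{j ≠ k} (λₖ - λⱼ)` of the derivative of `∏ⱼ (t - λⱼ)` at its roots. -/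
def rootGap (y : Fin 6 → ℝ) : Fin 3 → ℝ :=
  ![(y 0 - y 1) * (y 0 - y 2), (y 1 - y 0) * (y 1 - y 2), (y 2 - y 0) * (y 2 - y 1)]

variable (y v : Fin 6 → ℝ)

theorem contDiff_esymm₁ {n : WithTop ℕ∞} : ContDiff ℝ n esymm₁ := by unfold esymm₁; fun_prop

theorem contDiff_esymm₂ {n : WithTop ℕ∞} : ContDiff ℝ n esymm₂ := by unfold esymm₂; fun_prop

theorem contDiff_esymm₃ {n : WithTop ℕ∞} : ContDiff ℝ n esymm₃ := by unfold esymm₃; fun_prop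

theorem fderiv_esymm₁_apply : fderiv ℝ esymm₁ y v = v 0 + v 1 + v 2 := by
  unfold esymm₁
  simp (disch := fun_prop) [fderiv_fun_add, fderiv_apply]

theorem fderiv_esymm₂_apply :
    fderiv ℝ esymm₂ y v = (y 1 + y 2) * v 0 + (y 0 + y 2) * v 1 + (y 0 + y 1) * v 2 := by
  unfold esymm₂
  simp (disch := fun_prop) only [fderiv_fun_add, fderiv_fun_mul, fderiv_apply, fderiv_fun_id,
    ContinuousLinearMap.comp_id, _root_.add_apply, _root_.smul_apply,
    ContinuousLinearMap.proj_apply, smul_eq_mul]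
  ring

theorem fderiv_esymm₃_apply :
    fderiv ℝ esymm₃ y v = y 1 * y 2 * v 0 + y 0 * y 2 * v 1 + y 0 * y 1 * v 2 := by
  unfold esymm₃
  simp (disch := fun_prop) only [fderiv_fun_mul, fderiv_apply, fderiv_fun_id,
    ContinuousLinearMap.comp_id, _root_.add_apply, _root_.smul_apply,
    ContinuousLinearMap.proj_apply, smul_eq_mul]
  ring

theorem rootGap_mul_variation (k : Fin 3) :
    rootGap y k * positions id k v =
      positions id k y ^ 2 * fderiv ℝ esymm₁ y v - positions id k y * fderiv ℝ esymm₂ y v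
        + fderiv ℝ esymm₃ y v := by
  rw [fderiv_esymm₁_apply, fderiv_esymm₂_apply, fderiv_esymm₃_apply]
  fin_cases k <;>
    simp only [rootGap, positions, Fin.zero_eta, Fin.mk_one, Fin.reduceFinMk, Fin.isValue, cons_val,
      Fin.reduceCastAdd, id_eq] <;>
    ring

end ElementarySymmetric

section Phi

/-- The domain of the Nijenhuis coordinates: pairwise distinct `λ₁, λ₂, λ₃` with `λ₁ λ₂ λ₃ > 0`. -/
def nijenhuisDomain : Set (Fin 6 → ℝ) :=
  {y | y 0 ≠ y 1 ∧ y 0 ≠ y 2 ∧ y 1 ≠ y 2 ∧ 0 < esymm₃ y}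

theorem isOpen_nijenhuisDomain : IsOpen nijenhuisDomain :=
  have hne (i j : Fin 6) : IsOpen {y : Fin 6 → ℝ | y i ≠ y j} :=
    isOpen_ne_fun (continuous_apply i) (continuous_apply j)
  (hne 0 1).inter <| (hne 0 2).inter <| (hne 1 2).inter <|
    isOpen_lt continuous_const (contDiff_esymm₃ (n := 0)).continuous

variable {y : Fin 6 → ℝ}

theorem rootGap_ne_zero (hy : y ∈ nijenhuisDomain) (k : Fin 3) : rootGap y k ≠ 0 := by
  obtain ⟨h12, h13, h23, -⟩ := hy
  fin_cases k <;> simp [rootGap, sub_eq_zero, h12, h13, h23, h12.symm, h13.symm, h23.symm]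

theorem positions_Phi :
    positions Phi =
      ![fun y ↦ -(1 / 2) * esymm₁ y, fun y ↦ -(1 / 8) * esymm₁ y ^ 2 + (1 / 2) * esymm₂ y,
        fun y ↦ √(esymm₃ y)] := by
  funext k y
  fin_cases k <;> rfl

theorem momenta_Phi :
    momenta Phi =
      ![fun y ↦ ∑ k, momenta id k y / rootGap y k *
          (positions id k y * (esymm₁ y - 2 * positions id k y)),
        fun y ↦ -2 * ∑ k, momenta id k y / rootGap y k * positions id k y,
        fun y ↦ 2 * √(esymm₃ y) * ∑ k, momenta id k y / rootGap y k] := by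
  funext i y
  fin_cases i <;>
    simp only [momenta, positions, Phi, rootGap, esymm₁, esymm₃, Fin.sum_univ_three, Fin.zero_eta,
      Fin.mk_one, Fin.reduceFinMk, Fin.isValue, cons_val, Fin.natAdd_eq_addNat, Fin.reduceCastAdd,
      Fin.reduceAddNat, id_eq] <;>
    ring

theorem contDiffAt_positions_Phi {n : WithTop ℕ∞} (hy : y ∈ nijenhuisDomain) (i : Fin 3) :
    ContDiffAt ℝ n (positions Phi i) y := by
  rw [positions_Phi]
  have h₁ := (contDiff_esymm₁ (n := n)).contDiffAt (x := y)
  have h₂ := (contDiff_esymm₂ (n := n)).contDiffAt (x := y)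
  fin_cases i
  · exact contDiffAt_const.mul h₁
  · exact (contDiffAt_const.mul (h₁.pow 2)).add (contDiffAt_const.mul h₂)
  · exact contDiff_esymm₃.contDiffAt.sqrt hy.2.2.2.ne'

theorem differentiableAt_momenta_Phi (hy : y ∈ nijenhuisDomain) (i : Fin 3) :
    DifferentiableAt ℝ (momenta Phi i) y := by
  have hσ : y 0 * y 1 * y 2 ≠ 0 := hy.2.2.2.ne'
  have h₀ : (y 0 - y 1) * (y 0 - y 2) ≠ 0 := rootGap_ne_zero hy 0
  have h₁ : (y 1 - y 0) * (y 1 - y 2) ≠ 0 := rootGap_ne_zero hy 1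
  have h₂ : (y 2 - y 0) * (y 2 - y 1) ≠ 0 := rootGap_ne_zero hy 2
  unfold momenta
  fin_cases i <;>
    simp only [Phi, Fin.zero_eta, Fin.mk_one, Fin.reduceFinMk, Fin.isValue, cons_val,
      Fin.natAdd_eq_addNat, Fin.reduceAddNat] <;>
    fun_prop (disch := assumption)

theorem fderiv_positions_Phi_zero (y : Fin 6 → ℝ) :
    fderiv ℝ (positions Phi 0) y = -(1 / 2 : ℝ) • fderiv ℝ esymm₁ y := by
  rw [positions_Phi]
  exact fderiv_const_mul (contDiff_esymm₁.differentiable one_ne_zero y) _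

theorem fderiv_positions_Phi_one (y : Fin 6 → ℝ) :
    fderiv ℝ (positions Phi 1) y =
      -(1 / 4 * esymm₁ y) • fderiv ℝ esymm₁ y + (1 / 2 : ℝ) • fderiv ℝ esymm₂ y := by
  have h₁ := (contDiff_esymm₁.differentiable one_ne_zero y).hasFDerivAt
  have h₂ := (contDiff_esymm₂.differentiable one_ne_zero y).hasFDerivAt
  rw [positions_Phi]
  refine (((h₁.pow 2).const_mul _).add (h₂.const_mul _)).fderiv.trans ?_
  module

theorem fderiv_positions_Phi_two (hy : y ∈ nijenhuisDomain) :
    fderiv ℝ (positions Phi 2) y = (1 / (2 * √(esymm₃ y))) • fderiv ℝ esymm₃ y := by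
  rw [positions_Phi]
  exact fderiv_sqrt (contDiff_esymm₃.differentiable one_ne_zero y) hy.2.2.2.ne'

theorem liouvilleForm_Phi_apply (hy : y ∈ nijenhuisDomain) (v : Fin 6 → ℝ) :
    liouvilleForm (positions Phi) (momenta Phi) y v =
      ∑ k, momenta id k y / rootGap y k * (positions id k y ^ 2 * fderiv ℝ esymm₁ y v
        - positions id k y * fderiv ℝ esymm₂ y v + fderiv ℝ esymm₃ y v) := by
  have hsqrt : √(esymm₃ y) ≠ 0 := (Real.sqrt_pos.mpr hy.2.2.2).ne'
  simp only [liouvilleForm, Fin.sum_univ_three, fderiv_positions_Phi_zero,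
    fderiv_positions_Phi_one, fderiv_positions_Phi_two hy, momenta_Phi, _root_.add_apply,
    _root_.smul_apply, smul_eq_mul, cons_val]
  generalize fderiv ℝ esymm₁ y v = a, fderiv ℝ esymm₂ y v = b, fderiv ℝ esymm₃ y v = c
  field_simp
  ring

theorem liouvilleForm_Phi (hy : y ∈ nijenhuisDomain) :
    liouvilleForm (positions Phi) (momenta Phi) y =
      liouvilleForm (positions id) (momenta id) y := by
  ext1 v
  calc
    liouvilleForm (positions Phi) (momenta Phi) y v
      = ∑ k, momenta id k y / rootGap y k * (rootGap y k * positions id k v) := by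
        simp only [liouvilleForm_Phi_apply hy, rootGap_mul_variation]
    _ = ∑ k, momenta id k y * positions id k v :=
        Finset.sum_congr rfl fun k _ ↦ by
          rw [← mul_assoc, div_mul_cancel₀ _ (rootGap_ne_zero hy k)]
    _ = liouvilleForm (positions id) (momenta id) y v := by
        simp [liouvilleForm, fderiv_positions_id, positions]

end Phi

end HenonHeiles

open HenonHeiles

theorem henon_heiles_3dof_Phi_canonical
    (y : Fin 6 → ℝ)
    (h12 : y 0 ≠ y 1) (h13 : y 0 ≠ y 2) (h23 : y 1 ≠ y 2)
    (hpos : 0 < y 0 * y 1 * y 2) :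
    (JacPhi y)ᵀ * Jcan * JacPhi y = Jcan := by
  have hy : y ∈ nijenhuisDomain := ⟨h12, h13, h23, hpos⟩
  have hLiouville : liouvilleForm (positions Phi) (momenta Phi) =ᶠ[𝓝 y]
      liouvilleForm (positions id) (momenta id) :=
    (isOpen_nijenhuisDomain.eventually_mem hy).mono fun _ ↦ liouvilleForm_Phi
  ext i j
  rw [transpose_JacPhi_mul_Jcan_mul_JacPhi_apply, Jcan_apply_eq_canonicalTwoForm y]
  exact canonicalTwoForm_eq_of_liouvilleForm_eventuallyEq (contDiffAt_positions_Phi hy)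
    (differentiableAt_momenta_Phi hy) (fun k ↦ contDiffAt_apply ..)
    (fun k ↦ differentiableAt_apply ..) hLiouville _ _

end
end

section
/- The Poisson structures P0 and P1 of the four-degrees-of-freedom Hénon–Heiles type system are compatible: the bracket defined by the sum P0 + P1, namely {f,g}(x) = ∇f(x)ᵀ (P0 + P1(x)) ∇g(x), satisfies the Jacobi identity {f,{g,h}} + {g,{h,f}} + {h,{f,g}} = 0 for all smooth functions f,g,h on ℝ⁸. -/
/- STATEMENT 10: The Poisson structures P0 and P1 of the 4-dof Hénon–Heiles
type system are compatible: the bracket of P0 + P1 satisfies the Jacobi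
identity. -/

noncomputable section

open Matrix

/-- partial derivative of `f` at `x` in the `i`-th coordinate direction,
coordinates ordered as `(q1,q2,q3,q4,p1,p2,p3,p4)`. -/
def pd (i : Fin 8) (f : (Fin 8 → ℝ) → ℝ) (x : Fin 8 → ℝ) : ℝ :=
  fderiv ℝ f x (Pi.single i 1)

/-- the gradient of `f` at `x`. -/
def grad (f : (Fin 8 → ℝ) → ℝ) (x : Fin 8 → ℝ) : Fin 8 → ℝ :=
  fun i => pd i f x

/-- the canonical matrix `P0 = [[0, I],[−I, 0]]`. -/
def P0 : Matrix (Fin 8) (Fin 8) ℝ :=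
  !![0, 0, 0, 0, 1, 0, 0, 0;
     0, 0, 0, 0, 0, 1, 0, 0;
     0, 0, 0, 0, 0, 0, 1, 0;
     0, 0, 0, 0, 0, 0, 0, 1;
     -1, 0, 0, 0, 0, 0, 0, 0;
     0, -1, 0, 0, 0, 0, 0, 0;
     0, 0, -1, 0, 0, 0, 0, 0;
     0, 0, 0, -1, 0, 0, 0, 0]

/-- The matrix `P1 = [[0, A],[−Aᵀ, B]]` with
`A = −[[q1,−1,0,0],[q2,0,−1,0],[2q3,q2,q1,q4],[q4,0,0,0]]` and
`B = [[0,−p2,−p3,−p4],[p2,0,0,0],[p3,0,0,0],[p4,0,0,0]]`. -/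
def P1 (x : Fin 8 → ℝ) : Matrix (Fin 8) (Fin 8) ℝ :=
  !![0, 0, 0, 0, -(x 0), 1, 0, 0;
     0, 0, 0, 0, -(x 1), 0, 1, 0;
     0, 0, 0, 0, -(2 * x 2), -(x 1), -(x 0), -(x 3);
     0, 0, 0, 0, -(x 3), 0, 0, 0;
     x 0, x 1, 2 * x 2, x 3, 0, -(x 5), -(x 6), -(x 7);
     -1, 0, x 1, 0, x 5, 0, 0, 0;
     0, -1, x 0, 0, x 6, 0, 0, 0;
     0, 0, x 3, 0, x 7, 0, 0, 0]

/-- the bracket `{f,g}(x) = ∇f(x)ᵀ (P0 + P1(x)) ∇g(x)`. -/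
def pbSum (f g : (Fin 8 → ℝ) → ℝ) (x : Fin 8 → ℝ) : ℝ :=
  grad f x ⬝ᵥ (P0 + P1 x).mulVec (grad g x)

/-! In the cyclic sum of `{f, {g, h}}` the second derivatives cancel in pairs, because the tensor is
skew-symmetric and Hessians are symmetric. What remains is the Schouten bracket of the tensor with
itself, trilinear in the three differentials. As `P1` is affine, for `a • P0 + b • P1` its vanishing
is a polynomial identity in the coordinates and the components of the differentials. -/

section PoissonTensor

variable {𝕜 E : Type*} [NontriviallyNormedField 𝕜] [NormedAddCommGroup E] [NormedSpace 𝕜 E]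

/-- The bracket `{f, g} = dg (π df)` of a bivector field, encoded as the field of maps
`π x : E* → E` contracting the bivector at `x` with a covector in its first slot. -/
def poissonBracket (π : E → (E →L[𝕜] 𝕜) →L[𝕜] E) (f g : E → 𝕜) (x : E) : 𝕜 :=
  fderiv 𝕜 g x (π x (fderiv 𝕜 f x))

/-- The field `π` is a Poisson tensor at `x`: it is differentiable and skew-symmetric there, and
its Schouten bracket with itself, a trivector, vanishes at `x`. This is the pointwise condition
for the Jacobi identity of `poissonBracket π`. -/
structure IsPoissonTensorAt (π : E → (E →L[𝕜] 𝕜) →L[𝕜] E) (x : E) : Prop where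
  differentiableAt : DifferentiableAt 𝕜 π x
  skew : ∀ α β : E →L[𝕜] 𝕜, β (π x α) = -α (π x β)
  schouten : ∀ α β γ : E →L[𝕜] 𝕜,
    γ (fderiv 𝕜 π x (π x α) β) + α (fderiv 𝕜 π x (π x β) γ) + β (fderiv 𝕜 π x (π x γ) α) = 0

variable {π : E → (E →L[𝕜] 𝕜) →L[𝕜] E} {f g h : E → 𝕜} {x : E}

lemma IsPoissonTensorAt.fderiv_poissonBracket (hπ : IsPoissonTensorAt π x)
    (hf : DifferentiableAt 𝕜 (fderiv 𝕜 f) x) (hg : DifferentiableAt 𝕜 (fderiv 𝕜 g) x) (v : E) :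
    fderiv 𝕜 (poissonBracket π f g) x v =
      fderiv 𝕜 (fderiv 𝕜 g) x v (π x (fderiv 𝕜 f x))
        - fderiv 𝕜 (fderiv 𝕜 f) x v (π x (fderiv 𝕜 g x))
        + fderiv 𝕜 g x (fderiv 𝕜 π x v (fderiv 𝕜 f x)) := by
  have product_rule := hg.hasFDerivAt.clm_apply
    (hπ.differentiableAt.hasFDerivAt.clm_apply hf.hasFDerivAt)
  have skew := hπ.skew (fderiv 𝕜 (fderiv 𝕜 f) x v) (fderiv 𝕜 g x)
  unfold poissonBracket
  rw [product_rule.fderiv]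
  simp only [_root_.add_apply, ContinuousLinearMap.comp_apply,
    ContinuousLinearMap.flip_apply, map_add, skew]
  ring

theorem IsPoissonTensorAt.jacobi (hπ : IsPoissonTensorAt π x)
    (hf : ContDiffAt 𝕜 (minSmoothness 𝕜 2) f x) (hg : ContDiffAt 𝕜 (minSmoothness 𝕜 2) g x)
    (hh : ContDiffAt 𝕜 (minSmoothness 𝕜 2) h x) :
    poissonBracket π f (poissonBracket π g h) x + poissonBracket π g (poissonBracket π h f) x
      + poissonBracket π h (poissonBracket π f g) x = 0 := by
  have differentiableAt_fderiv {k : E → 𝕜} (hk : ContDiffAt 𝕜 (minSmoothness 𝕜 2) k x) :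
      DifferentiableAt 𝕜 (fderiv 𝕜 k) x :=
    (hk.fderiv_right (m := 1) (by simpa [one_add_one_eq_two] using le_minSmoothness))
      |>.differentiableAt one_ne_zero
  have df := differentiableAt_fderiv hf
  have dg := differentiableAt_fderiv hg
  have dh := differentiableAt_fderiv hh
  have symm_f := hf.isSymmSndFDerivAt le_rfl (π x (fderiv 𝕜 g x)) (π x (fderiv 𝕜 h x))
  have symm_g := hg.isSymmSndFDerivAt le_rfl (π x (fderiv 𝕜 h x)) (π x (fderiv 𝕜 f x))
  have symm_h := hh.isSymmSndFDerivAt le_rfl (π x (fderiv 𝕜 f x)) (π x (fderiv 𝕜 g x))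
  have schouten := hπ.schouten (fderiv 𝕜 f x) (fderiv 𝕜 g x) (fderiv 𝕜 h x)
  rw [poissonBracket, hπ.fderiv_poissonBracket dg dh, poissonBracket,
    hπ.fderiv_poissonBracket dh df, poissonBracket, hπ.fderiv_poissonBracket df dg]
  linear_combination schouten + symm_f + symm_g + symm_h

end PoissonTensor

section Coordinates

variable {𝕜 ι : Type*} [NontriviallyNormedField 𝕜]

lemma hasFDerivAt_sum_sum_smul_const {m n E F : Type*} [Fintype m] [Fintype n]
    [NormedAddCommGroup E] [NormedSpace 𝕜 E] [NormedAddCommGroup F] [NormedSpace 𝕜 F]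
    {M : E → Matrix m n 𝕜} {M' : Matrix m n (E →L[𝕜] 𝕜)} {x : E}
    (hM : ∀ i j, HasFDerivAt (fun y ↦ M y i j) (M' i j) x) (S : m → n → F) :
    HasFDerivAt (fun y ↦ ∑ i, ∑ j, M y i j • S i j) (∑ i, ∑ j, (M' i j).smulRight (S i j)) x :=
  HasFDerivAt.fun_sum fun i _ ↦ HasFDerivAt.fun_sum fun j _ ↦ (hM i j).smul_const (S i j)

variable [Fintype ι] [DecidableEq ι]

/-- The components of a covector in the standard dual basis; those of `fderiv 𝕜 f x` form the
gradient of `f` at `x`. -/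
def covectorCoord (α : (ι → 𝕜) →L[𝕜] 𝕜) : ι → 𝕜 := fun i ↦ α (Pi.single i 1)

lemma covectorCoord_dotProduct (α : (ι → 𝕜) →L[𝕜] 𝕜) (v : ι → 𝕜) :
    covectorCoord α ⬝ᵥ v = α v := by
  conv_rhs => rw [pi_eq_sum_univ' v]
  simp [covectorCoord, dotProduct, mul_comm]

/-- The map `E* → E` contracting the first factor of `eᵢ ⊗ eⱼ` with a covector. -/
def singleSharp (i j : ι) : ((ι → 𝕜) →L[𝕜] 𝕜) →L[𝕜] (ι → 𝕜) :=
  (ContinuousLinearMap.apply 𝕜 𝕜 (Pi.single i 1)).smulRight (Pi.single j 1)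

/-- The map `E* → E` contracting the first index of a matrix with a covector. It makes
`poissonBracket` the bracket `∇f ⬝ᵥ M *ᵥ ∇g`. -/
def matrixSharp (M : Matrix ι ι 𝕜) : ((ι → 𝕜) →L[𝕜] 𝕜) →L[𝕜] (ι → 𝕜) :=
  ∑ i, ∑ j, M i j • singleSharp i j

lemma matrixSharp_apply (M : Matrix ι ι 𝕜) (α : (ι → 𝕜) →L[𝕜] 𝕜) :
    matrixSharp M α = covectorCoord α ᵥ* M := by
  ext k
  simp [matrixSharp, singleSharp, covectorCoord, vecMul, dotProduct, Pi.single_apply, mul_comm]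

lemma apply_matrixSharp (M : Matrix ι ι 𝕜) (α β : (ι → 𝕜) →L[𝕜] 𝕜) :
    β (matrixSharp M α) = covectorCoord α ⬝ᵥ M *ᵥ covectorCoord β := by
  rw [← covectorCoord_dotProduct, matrixSharp_apply, dotProduct_comm, ← dotProduct_mulVec]

lemma poissonBracket_matrixSharp (M : (ι → 𝕜) → Matrix ι ι 𝕜) (f g : (ι → 𝕜) → 𝕜) (x : ι → 𝕜) :
    poissonBracket (fun y ↦ matrixSharp (M y)) f g x =
      covectorCoord (fderiv 𝕜 f x) ⬝ᵥ M x *ᵥ covectorCoord (fderiv 𝕜 g x) :=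
  apply_matrixSharp _ _ _

variable {M : (ι → 𝕜) → Matrix ι ι 𝕜} {M' : Matrix ι ι ((ι → 𝕜) →L[𝕜] 𝕜)} {x : ι → 𝕜}

lemma hasFDerivAt_matrixSharp (hM : ∀ i j, HasFDerivAt (fun y ↦ M y i j) (M' i j) x) :
    ∃ D : (ι → 𝕜) →L[𝕜] ((ι → 𝕜) →L[𝕜] 𝕜) →L[𝕜] (ι → 𝕜),
      HasFDerivAt (fun y ↦ matrixSharp (M y)) D x ∧
        ∀ v, D v = matrixSharp (M'.map fun φ ↦ φ v) := by
  have hD := hasFDerivAt_sum_sum_smul_const hM (singleSharp (𝕜 := 𝕜))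
  refine ⟨_, hD, fun v ↦ ?_⟩
  simp only [matrixSharp, _root_.sum_apply, ContinuousLinearMap.smulRight_apply, map_apply]

lemma isPoissonTensorAt_matrixSharp (hM : ∀ i j, HasFDerivAt (fun y ↦ M y i j) (M' i j) x)
    (skew : (M x)ᵀ = -M x)
    (schouten : ∀ u v w : ι → 𝕜,
      v ⬝ᵥ (M'.map fun φ ↦ φ (u ᵥ* M x)) *ᵥ w + w ⬝ᵥ (M'.map fun φ ↦ φ (v ᵥ* M x)) *ᵥ u
        + u ⬝ᵥ (M'.map fun φ ↦ φ (w ᵥ* M x)) *ᵥ v = 0) :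
    IsPoissonTensorAt (fun y ↦ matrixSharp (M y)) x := by
  obtain ⟨D, hD, D_apply⟩ := hasFDerivAt_matrixSharp hM
  refine ⟨hD.differentiableAt, fun α β ↦ ?_, fun α β γ ↦ ?_⟩
  · rw [apply_matrixSharp, apply_matrixSharp, dotProduct_mulVec, dotProduct_comm,
      ← mulVec_transpose, skew, neg_mulVec, dotProduct_neg]
  · rw [hD.fderiv, D_apply, D_apply, D_apply, apply_matrixSharp, apply_matrixSharp,
      apply_matrixSharp, matrixSharp_apply, matrixSharp_apply, matrixSharp_apply]
    exact schouten (covectorCoord α) (covectorCoord β) (covectorCoord γ)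

end Coordinates

/-- The linear part of the affine map `P1`. -/
def P1Linear : (Fin 8 → ℝ) →ₗ[ℝ] Matrix (Fin 8) (Fin 8) ℝ where
  toFun x := P1 x - P1 0
  map_add' x y := by
    simp only [P1, of_add_of, of_sub_of, cons_add_cons, cons_sub_cons, empty_add_empty,
      empty_sub_empty, Pi.add_apply, Pi.zero_apply]
    ring_nf
  map_smul' c x := by
    simp only [P1, smul_of, of_sub_of, smul_cons, cons_sub_cons, smul_empty, empty_sub_empty,
      Pi.smul_apply, Pi.zero_apply, smul_eq_mul, RingHom.id_apply]
    ring_nf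

/-- The differentials of the entries of `P1`, which do not depend on the base point. -/
def P1Deriv : Matrix (Fin 8) (Fin 8) ((Fin 8 → ℝ) →L[ℝ] ℝ) :=
  of fun i j ↦ LinearMap.toContinuousLinearMap (entryLinearMap ℝ ℝ i j ∘ₗ P1Linear)

lemma hasFDerivAt_P1 (x : Fin 8 → ℝ) (i j : Fin 8) :
    HasFDerivAt (fun y ↦ P1 y i j) (P1Deriv i j) x := by
  have affine : (fun y ↦ P1 y i j) = fun y ↦ P1 0 i j + P1Deriv i j y :=
    funext fun y ↦ (add_sub_cancel (P1 0 i j) (P1 y i j)).symm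
  rw [affine]
  exact (P1Deriv i j).hasFDerivAt.const_add _

/-- The pencil of matrices spanned by `P0` and `P1`; compatibility of the two Poisson structures
means that each member of it is a Poisson tensor. -/
def poissonPencil (a b : ℝ) (x : Fin 8 → ℝ) : Matrix (Fin 8) (Fin 8) ℝ :=
  a • P0 + b • P1 x

lemma hasFDerivAt_poissonPencil (a b : ℝ) (x : Fin 8 → ℝ) (i j : Fin 8) :
    HasFDerivAt (fun y ↦ poissonPencil a b y i j) ((b • P1Deriv) i j) x :=
  ((hasFDerivAt_P1 x i j).const_smul b).const_add (a • P0 i j)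

lemma P0_transpose : P0ᵀ = -P0 := by
  ext i j
  fin_cases i <;> fin_cases j <;> simp [P0]

lemma P1_transpose (x : Fin 8 → ℝ) : (P1 x)ᵀ = -P1 x := by
  ext i j
  fin_cases i <;> fin_cases j <;> simp [P1]

lemma poissonPencil_transpose (a b : ℝ) (x : Fin 8 → ℝ) :
    (poissonPencil a b x)ᵀ = -poissonPencil a b x := by
  simp only [poissonPencil, transpose_add, transpose_smul, P0_transpose, P1_transpose,
    smul_neg, neg_add]

lemma dotProduct_P1Linear_mulVec (x u v : Fin 8 → ℝ) :
    u ⬝ᵥ P1Linear x *ᵥ v =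
      x 0 * (u 4 * v 0 - u 0 * v 4 + u 6 * v 2 - u 2 * v 6)
        + x 1 * (u 4 * v 1 - u 1 * v 4 + u 5 * v 2 - u 2 * v 5)
        + 2 * x 2 * (u 4 * v 2 - u 2 * v 4)
        + x 3 * (u 4 * v 3 - u 3 * v 4 + u 7 * v 2 - u 2 * v 7)
        + x 5 * (u 5 * v 4 - u 4 * v 5) + x 6 * (u 6 * v 4 - u 4 * v 6)
        + x 7 * (u 7 * v 4 - u 4 * v 7) := by
  simp only [P1Linear, LinearMap.coe_mk, AddHom.coe_mk, P1, dotProduct, mulVec,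
    Fin.sum_univ_eight, Matrix.sub_apply, of_apply, cons_val, Pi.zero_apply]
  ring

lemma vecMul_poissonPencil (a b : ℝ) (x u : Fin 8 → ℝ) :
    u ᵥ* poissonPencil a b x =
      ![b * (u 4 * x 0 - u 5) - a * u 4,
        b * (u 4 * x 1 - u 6) - a * u 5,
        b * (2 * u 4 * x 2 + u 5 * x 1 + u 6 * x 0 + u 7 * x 3) - a * u 6,
        b * u 4 * x 3 - a * u 7,
        a * u 0 - b * (u 0 * x 0 + u 1 * x 1 + 2 * u 2 * x 2 + u 3 * x 3
          - u 5 * x 5 - u 6 * x 6 - u 7 * x 7),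
        a * u 1 + b * (u 0 - u 2 * x 1 - u 4 * x 5),
        a * u 2 + b * (u 1 - u 2 * x 0 - u 4 * x 6),
        a * u 3 - b * (u 2 * x 3 + u 4 * x 7)] := by
  ext i
  fin_cases i <;>
  · simp only [poissonPencil, P0, P1, vecMul, dotProduct, Fin.sum_univ_eight, Matrix.add_apply,
      Matrix.smul_apply, smul_eq_mul, of_apply, cons_val, Fin.zero_eta, Fin.mk_one,
      Fin.reduceFinMk]
    ring

lemma poissonPencil_schouten (a b : ℝ) (x u v w : Fin 8 → ℝ) :
    v ⬝ᵥ P1Linear (u ᵥ* poissonPencil a b x) *ᵥ w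
      + w ⬝ᵥ P1Linear (v ᵥ* poissonPencil a b x) *ᵥ u
      + u ⬝ᵥ P1Linear (w ᵥ* poissonPencil a b x) *ᵥ v = 0 := by
  simp only [dotProduct_P1Linear_mulVec, vecMul_poissonPencil, cons_val]
  ring

lemma isPoissonTensorAt_poissonPencil (a b : ℝ) (x : Fin 8 → ℝ) :
    IsPoissonTensorAt (fun y ↦ matrixSharp (poissonPencil a b y)) x := by
  refine isPoissonTensorAt_matrixSharp (hasFDerivAt_poissonPencil a b x)
    (poissonPencil_transpose a b x) fun u v w ↦ ?_
  have map_apply (y : Fin 8 → ℝ) : ((b • P1Deriv).map fun φ ↦ φ y) = b • P1Linear y := rfl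
  simp only [map_apply, smul_mulVec, dotProduct_smul, ← smul_add, poissonPencil_schouten,
    smul_zero]

lemma pbSum_eq_poissonBracket :
    pbSum = poissonBracket fun x ↦ matrixSharp (poissonPencil 1 1 x) := by
  funext f g x
  rw [poissonBracket_matrixSharp, poissonPencil, one_smul, one_smul]
  rfl

theorem henon_heiles_4dof_P0_P1_compatible_general (a b : ℝ) {f g h : (Fin 8 → ℝ) → ℝ}
    {x : Fin 8 → ℝ} (hf : ContDiffAt ℝ 2 f x) (hg : ContDiffAt ℝ 2 g x)
    (hh : ContDiffAt ℝ 2 h x) :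
    letI bracket := poissonBracket fun y ↦ matrixSharp (poissonPencil a b y)
    bracket f (bracket g h) x + bracket g (bracket h f) x + bracket h (bracket f g) x = 0 :=
  (isPoissonTensorAt_poissonPencil a b x).jacobi (by simpa) (by simpa) (by simpa)

theorem henon_heiles_4dof_P0_P1_compatible :
    ∀ f g h : (Fin 8 → ℝ) → ℝ, ContDiff ℝ (⊤ : ℕ∞) f → ContDiff ℝ (⊤ : ℕ∞) g → ContDiff ℝ (⊤ : ℕ∞) h →
      ∀ x : Fin 8 → ℝ,
        pbSum f (pbSum g h) x + pbSum g (pbSum h f) x + pbSum h (pbSum f g) x = 0 := by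
  intro f g h hf hg hh x
  have contDiffAt_two {k : (Fin 8 → ℝ) → ℝ} (hk : ContDiff ℝ (⊤ : ℕ∞) k) : ContDiffAt ℝ 2 k x :=
    (contDiff_infty.1 hk 2).contDiffAt
  rw [pbSum_eq_poissonBracket]
  exact henon_heiles_4dof_P0_P1_compatible_general 1 1
    (contDiffAt_two hf) (contDiffAt_two hg) (contDiffAt_two hh)

end
end
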